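/- arXiv:2306.11705 — 3 statements merged into one kernel-verified Lean document; each statement's English description precedes it below -/
import Mathlib

section
/- (Outer bound of the DI capacity region of a K-MAC.) Let W : X_1×⋯×X_K → P(Y) be a K-MAC with cost functions φ_k : X_k → [0,∞) and bounds Φ_k ≥ 0. Then the DI capacity region satisfies C_DI(W, φ, Φ) ⊆ ⋃_{p_𝐗} {R ∈ [0,∞)^K : R_k ≤ H(X_k) for all k}, where the union ranges over all joint distributions p_𝐗 of 𝐗 = (X_1,…,X_K) on X_1×⋯×X_K with E[φ_k(X_k)] ≤ Φ_k for all k, and H(X_k) is the Shannon entropy (base 2) of the k-th marginal. -/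
open scoped BigOperators

/-- A probability distribution on a finite alphabet, given as a function. -/
def IsDist {α : Type*} [Fintype α] (p : α → ℝ) : Prop :=
  (∀ x, 0 ≤ p x) ∧ ∑ x, p x = 1

open Classical in
/-- Probability of an event under a distribution on a finite alphabet. -/
noncomputable def pr {α : Type*} [Fintype α] (p : α → ℝ) (A : α → Prop) : ℝ :=
  ∑ x, if A x then p x else 0

/-- Shannon entropy, base 2 (with the convention `0 * log 0 = 0`). -/
noncomputable def H2 {α : Type*} [Fintype α] (p : α → ℝ) : ℝ :=
  ∑ x, -(p x * Real.logb 2 (p x))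

open Classical in
/-- The empirical distribution (type) of a sequence. -/
noncomputable def empDist {α : Type*} [Fintype α] {n : ℕ} (x : Fin n → α) (a : α) : ℝ :=
  ((Finset.univ.filter fun i => x i = a).card : ℝ) / (n : ℝ)

/-- `p` is an `n`-type, i.e. the empirical distribution of some length-`n` sequence. -/
def IsNType {α : Type*} [Fintype α] (n : ℕ) (p : α → ℝ) : Prop :=
  ∃ x : Fin n → α, empDist x = p

/-- Memoryless extension of a point-to-point channel. -/
noncomputable def dmcExt {X Y : Type*} (V : X → Y → ℝ) (n : ℕ)
    (x : Fin n → X) (y : Fin n → Y) : ℝ :=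
  ∏ i, V (x i) (y i)

/-- `(f, g)` is an `(M, n, lam)` deterministic-identification code for the
(block) channel `Vn`. -/
def IsDICode {X Y : Type*} [Fintype X] [Fintype Y] {n M : ℕ}
    (Vn : (Fin n → X) → (Fin n → Y) → ℝ)
    (f : Fin M → Fin n → X) (g : Fin M → (Fin n → Y) → Bool) (lam : ℝ) : Prop :=
  (∀ m, pr (Vn (f m)) (fun y => g m y = false) ≤ lam) ∧
  (∀ m m', m ≠ m' → pr (Vn (f m)) (fun y => g m' y = true) ≤ lam)

/-- Rate `R` is DI-achievable over the DMC `V` under the cost constraint `(φ, Φ)`. -/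
def dmcAchievable {X Y : Type*} [Fintype X] [Fintype Y]
    (V : X → Y → ℝ) (φ : X → ℝ) (Φ : ℝ) (R : ℝ) : Prop :=
  0 ≤ R ∧ ∀ lam > (0 : ℝ), ∃ N : ℕ, ∀ n ≥ N,
    ∃ (f : Fin ⌈(2:ℝ) ^ ((n:ℝ) * R)⌉₊ → Fin n → X)
      (g : Fin ⌈(2:ℝ) ^ ((n:ℝ) * R)⌉₊ → (Fin n → Y) → Bool),
      (∀ m, (1 / (n:ℝ)) * ∑ i, φ (f m i) ≤ Φ) ∧ IsDICode (dmcExt V n) f g lam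

/-- The DI capacity of a DMC under an input cost constraint. -/
noncomputable def CDIdmc {X Y : Type*} [Fintype X] [Fintype Y]
    (V : X → Y → ℝ) (φ : X → ℝ) (Φ : ℝ) : ℝ :=
  sSup {R | dmcAchievable V φ Φ R}

/-! ### K-input multiple-access channels -/

/-- Memoryless extension of a `K`-MAC. -/
noncomputable def macExt {K : ℕ} {X : Fin K → Type*} {Y : Type*}
    (W : (∀ k, X k) → Y → ℝ) (n : ℕ)
    (x : ∀ k, Fin n → X k) (y : Fin n → Y) : ℝ :=
  ∏ i, W (fun k => x k i) (y i)

/-- The component error probability `e_k(m'|m)` of a MAC DI code. -/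
noncomputable def macErr {K : ℕ} {X : Fin K → Type*} {Y : Type*} [Fintype Y]
    (W : (∀ k, X k) → Y → ℝ) (n : ℕ) {M : Fin K → ℕ}
    (f : ∀ k, Fin (M k) → Fin n → X k)
    (g : (∀ k, Fin (M k)) → (Fin n → Y) → Fin K → Bool)
    (k : Fin K) (m' m : ∀ j, Fin (M j)) : ℝ :=
  pr (macExt W n (fun j => f j (m j))) (fun y => g m' y k ≠ decide (m' k = m k))

/-- The average input cost constraint of a MAC code. -/
def macCost {K : ℕ} {X : Fin K → Type*} (n : ℕ) {M : Fin K → ℕ}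
    (f : ∀ k, Fin (M k) → Fin n → X k) (φ : ∀ k, X k → ℝ) (Φ : Fin K → ℝ) : Prop :=
  ∀ k, ∀ mk : Fin (M k), (1 / (n:ℝ)) * ∑ i, φ k (f k mk i) ≤ Φ k

/-- `(f, g)` is an `(M, n, φ, Φ, lam)` (maximal-error) DI code for the `K`-MAC `W`. -/
def IsMACDICode {K : ℕ} {X : Fin K → Type*} {Y : Type*} [Fintype Y]
    (W : (∀ k, X k) → Y → ℝ) (n : ℕ) {M : Fin K → ℕ}
    (f : ∀ k, Fin (M k) → Fin n → X k)
    (g : (∀ k, Fin (M k)) → (Fin n → Y) → Fin K → Bool)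
    (φ : ∀ k, X k → ℝ) (Φ : Fin K → ℝ) (lam : ℝ) : Prop :=
  macCost n f φ Φ ∧ ∀ k (m m' : ∀ j, Fin (M j)), macErr W n f g k m' m ≤ lam

/-- A rate tuple is DI-achievable over the `K`-MAC `W` under cost constraints `(φ, Φ)`. -/
def macAchievable {K : ℕ} {X : Fin K → Type*} {Y : Type*} [Fintype Y]
    (W : (∀ k, X k) → Y → ℝ) (φ : ∀ k, X k → ℝ) (Φ : Fin K → ℝ)
    (R : Fin K → ℝ) : Prop :=
  (∀ k, 0 ≤ R k) ∧ ∀ lam > (0 : ℝ), ∃ N : ℕ, ∀ n ≥ N,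
    ∃ (f : ∀ k, Fin ⌈(2:ℝ) ^ ((n:ℝ) * R k)⌉₊ → Fin n → X k)
      (g : (∀ k, Fin ⌈(2:ℝ) ^ ((n:ℝ) * R k)⌉₊) → (Fin n → Y) → Fin K → Bool),
      IsMACDICode W n f g φ Φ lam

/-- The (maximal-error) DI capacity region of a `K`-MAC:
the closure of the set of achievable rate tuples. -/
def CDImac {K : ℕ} {X : Fin K → Type*} {Y : Type*} [Fintype Y]
    (W : (∀ k, X k) → Y → ℝ) (φ : ∀ k, X k → ℝ) (Φ : Fin K → ℝ) :
    Set (Fin K → ℝ) :=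
  closure {R | macAchievable W φ Φ R}

open Classical in
/-- The average false-identification error probability `ē_k(m')` of a MAC code:
the average of `e_k(m'|m)` over `m` with `m_k` uniform on `[M_k] ∖ {m'_k}` and
`m_j` uniform on `[M_j]` for `j ≠ k`. -/
noncomputable def macAvgErr {K : ℕ} {X : Fin K → Type*} {Y : Type*} [Fintype Y]
    (W : (∀ k, X k) → Y → ℝ) (n : ℕ) {M : Fin K → ℕ}
    (f : ∀ k, Fin (M k) → Fin n → X k)
    (g : (∀ k, Fin (M k)) → (Fin n → Y) → Fin K → Bool)
    (k : Fin K) (m' : ∀ j, Fin (M j)) : ℝ :=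
  (∑ m ∈ Finset.univ.filter (fun m : ∀ j, Fin (M j) => m k ≠ m' k),
      macErr W n f g k m' m) /
    (((M k : ℝ) - 1) * ∏ j ∈ Finset.univ.erase k, (M j : ℝ))

/-- `(f, g)` is an `(M, n, φ, Φ, lam)` average-error DI (DIA) code for the `K`-MAC `W`. -/
def IsMACDIACode {K : ℕ} {X : Fin K → Type*} {Y : Type*} [Fintype Y]
    (W : (∀ k, X k) → Y → ℝ) (n : ℕ) {M : Fin K → ℕ}
    (f : ∀ k, Fin (M k) → Fin n → X k)
    (g : (∀ k, Fin (M k)) → (Fin n → Y) → Fin K → Bool)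
    (φ : ∀ k, X k → ℝ) (Φ : Fin K → ℝ) (lam : ℝ) : Prop :=
  macCost n f φ Φ ∧
  (∀ k (m : ∀ j, Fin (M j)), macErr W n f g k m m ≤ lam) ∧
  (∀ k (m' : ∀ j, Fin (M j)), macAvgErr W n f g k m' ≤ lam)

open Classical in
/-- `(f, g)` is an `(M, n, φ, Φ, lam)` average-error DI (DIA) code for the DMC `V`. -/
def IsDMCDIACode {X Y : Type*} [Fintype X] [Fintype Y] {n M : ℕ}
    (V : X → Y → ℝ) (f : Fin M → Fin n → X) (g : Fin M → (Fin n → Y) → Bool)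
    (φ : X → ℝ) (Φ lam : ℝ) : Prop :=
  (∀ m, (1 / (n:ℝ)) * ∑ i, φ (f m i) ≤ Φ) ∧
  (∀ m, pr (dmcExt V n (f m)) (fun y => g m y = false) ≤ lam) ∧
  (∀ m' : Fin M, (∑ m ∈ Finset.univ.filter (fun m => m ≠ m'),
      pr (dmcExt V n (f m)) (fun y => g m' y = true)) / ((M : ℝ) - 1) ≤ lam)

/-! ### Joint distributions of `(X, X', S, Y)`, the set `Q`, and mutual information -/

section Joint

variable {A S Y : Type*} [Fintype A] [Fintype S] [Fintype Y]

noncomputable def margX (q : A × A × S × Y → ℝ) (a : A) : ℝ :=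
  ∑ a', ∑ s, ∑ y, q (a, a', s, y)

noncomputable def margX' (q : A × A × S × Y → ℝ) (a' : A) : ℝ :=
  ∑ a, ∑ s, ∑ y, q (a, a', s, y)

noncomputable def margS (q : A × A × S × Y → ℝ) (s : S) : ℝ :=
  ∑ a, ∑ a', ∑ y, q (a, a', s, y)

noncomputable def margXY (q : A × A × S × Y → ℝ) (a : A) (y : Y) : ℝ :=
  ∑ a', ∑ s, q (a, a', s, y)

noncomputable def margX'Y (q : A × A × S × Y → ℝ) (a' : A) (y : Y) : ℝ :=
  ∑ a, ∑ s, q (a, a', s, y)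

noncomputable def margXX' (q : A × A × S × Y → ℝ) (a a' : A) : ℝ :=
  ∑ s, ∑ y, q (a, a', s, y)

noncomputable def margXX'Y (q : A × A × S × Y → ℝ) (a a' : A) (y : Y) : ℝ :=
  ∑ s, q (a, a', s, y)

noncomputable def margXSY (q : A × A × S × Y → ℝ) : A × S × Y → ℝ :=
  fun t => ∑ a', q (t.1, a', t.2.1, t.2.2)

noncomputable def margXX'S (q : A × A × S × Y → ℝ) : A × A × S → ℝ :=
  fun t => ∑ y, q (t.1, t.2.1, t.2.2, y)

noncomputable def margX'SY (q : A × A × S × Y → ℝ) : A × S × Y → ℝ :=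
  fun t => ∑ a, q (a, t.1, t.2.1, t.2.2)

noncomputable def margX'S (q : A × A × S × Y → ℝ) : A × S → ℝ :=
  fun t => ∑ a, ∑ y, q (a, t.1, t.2, y)

/-- The mutual information `I(X'; X, S, Y)` of a joint distribution of `(X, X', S, Y)`. -/
noncomputable def infoX' (q : A × A × S × Y → ℝ) : ℝ :=
  H2 (margX' q) + H2 (margXSY q) - H2 q

/-- The conditional mutual information `I(X; Y | X', S)`. -/
noncomputable def condMIXY (q : A × A × S × Y → ℝ) : ℝ :=
  H2 (margXX'S q) + H2 (margX'SY q) - H2 q - H2 (margX'S q)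

/-- The set `Q(P, P_S, W)` of joint distributions of `(X, X', S, Y)` such that the
`S`-marginal lies in `P_S`, `p_{Y|X} = p_S W`, `p_{Y|X'} = p_{S'} W` for some
`p_{S'} ∈ P_S`, both `X`- and `X'`-marginals equal `P`, and `X − X' − Y` is a
Markov chain. -/
def QSet (P : A → ℝ) (PS : Set (S → ℝ)) (W : A → S → Y → ℝ) :
    Set (A × A × S × Y → ℝ) :=
  { q | IsDist q ∧ margS q ∈ PS ∧
    (∀ a y, margXY q a y = margX q a * ∑ s, margS q s * W a s y) ∧
    (∃ pS' ∈ PS, ∀ a y, margX'Y q a y = margX' q a * ∑ s, pS' s * W a s y) ∧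
    margX q = P ∧ margX' q = P ∧
    (∀ a a' y, margXX'Y q a a' y * margX' q a' = margXX' q a a' * margX'Y q a' y) }

/-- The set `Q_δ(P, P_S, W)`: as `QSet`, but with the Markov-chain condition replaced by
`I(X; Y | X', S) ≤ δ`. -/
def QdSet (P : A → ℝ) (PS : Set (S → ℝ)) (W : A → S → Y → ℝ) (δ : ℝ) :
    Set (A × A × S × Y → ℝ) :=
  { q | IsDist q ∧ margS q ∈ PS ∧
    (∀ a y, margXY q a y = margX q a * ∑ s, margS q s * W a s y) ∧
    (∃ pS' ∈ PS, ∀ a y, margX'Y q a y = margX' q a * ∑ s, pS' s * W a s y) ∧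
    margX q = P ∧ margX' q = P ∧
    condMIXY q ≤ δ }

/-- `min_{q ∈ Qs} I(X'; X, S, Y)`. -/
noncomputable def minInfoX' (Qs : Set (A × A × S × Y → ℝ)) : ℝ :=
  sInf (infoX' '' Qs)

end Joint

/-! ### Viewing one sender of a `K`-MAC as input, the others as state -/

/-- Combine an input `a : X k` with inputs of all other senders into a full input tuple. -/
def insertAt {K : ℕ} {X : Fin K → Type*} (k : Fin K) (a : X k)
    (s : ∀ j : {j : Fin K // j ≠ k}, X j.val) (j : Fin K) : X j :=
  if h : j = k then cast (congrArg X h).symm a else s ⟨j, h⟩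

/-- Marginal distribution of the `k`-th component. -/
noncomputable def margKth {K : ℕ} {X : Fin K → Type*} [∀ k, Fintype (X k)]
    (p : (∀ k, X k) → ℝ) (k : Fin K) (a : X k) : ℝ :=
  ∑ s : ∀ j : {j : Fin K // j ≠ k}, X j.val, p (insertAt k a s)

/-- Marginal distribution of all components except the `k`-th, i.e. of `S_k`. -/
noncomputable def margRest {K : ℕ} {X : Fin K → Type*} [∀ k, Fintype (X k)]
    (p : (∀ k, X k) → ℝ) (k : Fin K)
    (s : ∀ j : {j : Fin K // j ≠ k}, X j.val) : ℝ :=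
  ∑ a : X k, p (insertAt k a s)

/-- The `K`-MAC viewed as a point-to-point channel with input `X k` and state `S_k`. -/
def partialW {K : ℕ} {X : Fin K → Type*} {Y : Type*}
    (W : (∀ k, X k) → Y → ℝ) (k : Fin K) (a : X k)
    (s : ∀ j : {j : Fin K // j ≠ k}, X j.val) (y : Y) : ℝ :=
  W (insertAt k a s) y

/-- Mutual information `I(X, S; X')` of a joint distribution on `X × X × S`. -/
noncomputable def miXSX' {X S : Type*} [Fintype X] [Fintype S]
    (pj : X × X × S → ℝ) : ℝ :=
  H2 (fun t : X × S => ∑ a', pj (t.1, a', t.2)) +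
    H2 (fun a' : X => ∑ a, ∑ s, pj (a, a', s)) - H2 pj

/-!
A DI code with error below `1/2` has injective encoders: if two messages of sender `k` share a
codeword, the same output distribution would have to be both accepted and rejected with probability
above `1/2`. For an injective encoder `f : [M] → A^n`, let `P` be the distribution of a letter drawn
uniformly from the whole codebook. It meets the cost constraint because every codeword does.
The product measure `P^n` gives the codebook mass at most `1`, so Gibbs' inequality against the
uniform distribution on the codewords reads `log M ≤ n H(P)`. The resulting single-letter bounds
survive the closure since feasible distributions form a compact set on which `H` is continuous,
and independent inputs realise the bounds of all senders at once.
-/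

section Topology

variable {α β : Type*} [TopologicalSpace α] [LinearOrder β] [TopologicalSpace β]
  [OrderClosedTopology β]

lemma isClosed_setOf_exists_mem_le {s : Set α} {H : α → β} (hs : IsCompact s)
    (hH : ContinuousOn H s) : IsClosed {r | ∃ a ∈ s, r ≤ H a} := by
  rcases s.eq_empty_or_nonempty with rfl | hne
  · simp
  obtain ⟨a, ha, hmax⟩ := hs.exists_isMaxOn hne hH
  have hIic : {r | ∃ a ∈ s, r ≤ H a} = Set.Iic (H a) := by
    ext r
    exact ⟨fun ⟨b, hb, hr⟩ => hr.trans (hmax hb), fun hr => ⟨a, ha, hr⟩⟩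
  exact hIic ▸ isClosed_Iic

end Topology

section Distributions

variable {α : Type*} [Fintype α]

lemma continuous_H2 : Continuous (H2 : (α → ℝ) → ℝ) := by
  have hlog (x : ℝ) : -(x * Real.logb 2 x) = Real.negMulLog x / Real.log 2 := by
    rw [Real.negMulLog, Real.logb]
    ring
  unfold H2
  simp only [hlog]
  fun_prop

/-- The distributions on `α` whose expected cost under `φ` is at most `Φ`: the admissible
single-letter input distributions of a sender. -/
def costSimplex (φ : α → ℝ) (Φ : ℝ) : Set (α → ℝ) :=
  {P | IsDist P ∧ ∑ a, P a * φ a ≤ Φ}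

lemma isCompact_costSimplex (φ : α → ℝ) (Φ : ℝ) : IsCompact (costSimplex φ Φ) :=
  have hcost : IsClosed {P : α → ℝ | ∑ a, P a * φ a ≤ Φ} :=
    isClosed_le (by fun_prop) continuous_const
  (isCompact_stdSimplex ℝ α).inter_right hcost

lemma pr_add_pr_not (p : α → ℝ) (A : α → Prop) : pr p A + pr p (fun x => ¬A x) = ∑ x, p x := by
  simp only [pr, ← Finset.sum_add_distrib]
  refine Finset.sum_congr rfl fun x _ => ?_
  by_cases hA : A x <;> simp [hA]

end Distributions

section Products

lemma IsDist.pi_prod {ι : Type*} [Fintype ι] [DecidableEq ι] {X : ι → Type*} [∀ i, Fintype (X i)]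
    {P : ∀ i, X i → ℝ} (hP : ∀ i, IsDist (P i)) :
    IsDist fun x : ∀ i, X i => ∏ i, P i (x i) :=
  ⟨fun x => Finset.prod_nonneg fun i _ => (hP i).1 (x i), by
    rw [← Fintype.prod_sum]
    exact Finset.prod_eq_one fun i _ => (hP i).2⟩

lemma IsDist.sum_prod_le_one_of_injective {ι κ A : Type*} [Fintype ι] [Fintype κ] [Fintype A]
    {P : A → ℝ} (hP : IsDist P) {f : ι → κ → A} (hf : Function.Injective f) :
    ∑ m, ∏ i, P (f m i) ≤ 1 := by
  classical
  have hPκ : IsDist fun x : κ → A => ∏ i, P (x i) := IsDist.pi_prod fun _ => hP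
  calc ∑ m, ∏ i, P (f m i) = ∑ x ∈ Finset.univ.map ⟨f, hf⟩, ∏ i, P (x i) := by
        rw [Finset.sum_map, Function.Embedding.coeFn_mk]
    _ ≤ ∑ x : κ → A, ∏ i, P (x i) := Finset.sum_le_univ_sum_of_nonneg hPκ.1
    _ = 1 := hPκ.2

variable {K : ℕ} {X : Fin K → Type*}

lemma insertAt_eq_piSplitAt_symm (k : Fin K) (a : X k)
    (s : ∀ j : {j : Fin K // j ≠ k}, X j.val) :
    insertAt k a s = (Equiv.piSplitAt k X).symm (a, s) := by
  funext j
  by_cases hj : j = k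
  · subst hj
    simp [insertAt, Equiv.piSplitAt]
  · simp [insertAt, Equiv.piSplitAt, hj]

variable [∀ k, Fintype (X k)]

lemma sum_mul_apply_eq_sum_margKth (p : (∀ k, X k) → ℝ) (k : Fin K) (F : X k → ℝ) :
    ∑ x, p x * F (x k) = ∑ a, margKth p k a * F a := by
  simp only [margKth, insertAt_eq_piSplitAt_symm, Finset.sum_mul]
  rw [← (Equiv.piSplitAt k X).symm.sum_comp, Fintype.sum_prod_type]
  simp [Equiv.piSplitAt]

lemma margKth_pi_prod {P : ∀ k, X k → ℝ} (k : Fin K) (hP : ∀ j ≠ k, ∑ a, P j a = 1) :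
    margKth (fun x => ∏ j, P j (x j)) k = P k := by
  funext a
  have hsplit (s : ∀ j : {j : Fin K // j ≠ k}, X j.val) :
      ∏ j, P j (insertAt k a s j) = P k a * ∏ j : {j : Fin K // j ≠ k}, P j.val (s j) := by
    rw [Fintype.prod_eq_mul_prod_subtype_ne _ k]
    congr 1
    · simp [insertAt]
    · exact Finset.prod_congr rfl fun j _ => by simp [insertAt, j.2]
  calc margKth (fun x => ∏ j, P j (x j)) k a
      = P k a * ∏ j : {j : Fin K // j ≠ k}, ∑ b, P j.val b := by
        simp only [margKth, hsplit, ← Finset.mul_sum, Fintype.prod_sum]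
    _ = P k a := by rw [Finset.prod_eq_one fun j _ => hP j.val j.2, mul_one]

end Products

section Empirical

variable {A : Type*} [Fintype A] {n M : ℕ}

lemma sum_empDist_mul (x : Fin n → A) (F : A → ℝ) :
    ∑ a, empDist x a * F a = (∑ i, F (x i)) / n := by
  classical
  simp only [empDist, div_mul_eq_mul_div, ← Finset.sum_div]
  congr 1
  simp only [Finset.card_filter, Nat.cast_sum, Finset.sum_mul]
  rw [Finset.sum_comm]
  simp

lemma isDist_empDist (hn : n ≠ 0) (x : Fin n → A) : IsDist (empDist x) := by
  refine ⟨fun a => by unfold empDist; positivity, ?_⟩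
  simpa [hn] using sum_empDist_mul x fun _ => 1

lemma empDist_apply_pos (x : Fin n → A) (i : Fin n) : 0 < empDist x (x i) := by
  classical
  have hn : 0 < n := i.pos
  have hcard : 0 < (Finset.univ.filter fun j => x j = x i).card :=
    Finset.card_pos.2 ⟨i, by simp⟩
  unfold empDist
  positivity

/-- The empirical distribution of all `M * n` letters of a codebook, i.e. the law of a uniformly
random letter of a uniformly random codeword; the codewords are concatenated via
`finProdFinEquiv`. -/
noncomputable def codebookDist (f : Fin M → Fin n → A) : A → ℝ :=
  empDist fun j => f (finProdFinEquiv.symm j).1 (finProdFinEquiv.symm j).2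

lemma sum_codebookDist_mul (f : Fin M → Fin n → A) (F : A → ℝ) :
    ∑ a, codebookDist f a * F a = (∑ m, ∑ i, F (f m i)) / (M * n) := by
  rw [codebookDist, sum_empDist_mul, Nat.cast_mul, ← Fintype.sum_prod_type']
  congr 1
  exact finProdFinEquiv.symm.sum_comp fun p : Fin M × Fin n => F (f p.1 p.2)

lemma isDist_codebookDist (hM : M ≠ 0) (hn : n ≠ 0) (f : Fin M → Fin n → A) :
    IsDist (codebookDist f) :=
  isDist_empDist (mul_ne_zero hM hn) _

lemma codebookDist_apply_pos (f : Fin M → Fin n → A) (m : Fin M) (i : Fin n) :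
    0 < codebookDist f (f m i) := by
  simpa [codebookDist] using empDist_apply_pos
    (fun j => f (finProdFinEquiv.symm j).1 (finProdFinEquiv.symm j).2) (finProdFinEquiv (m, i))

lemma codebookDist_mem_costSimplex (hM : M ≠ 0) (hn : n ≠ 0) {f : Fin M → Fin n → A}
    {φ : A → ℝ} {Φ : ℝ} (hf : ∀ m, (1 / (n : ℝ)) * ∑ i, φ (f m i) ≤ Φ) :
    codebookDist f ∈ costSimplex φ Φ := by
  refine ⟨isDist_codebookDist hM hn f, ?_⟩
  calc ∑ a, codebookDist f a * φ a
      = (∑ m, (1 / (n : ℝ)) * ∑ i, φ (f m i)) / M := by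
        rw [sum_codebookDist_mul, ← Finset.mul_sum]
        field_simp
    _ ≤ (∑ _m : Fin M, Φ) / M := by gcongr with m; exact hf m
    _ = Φ := by simp [hM]

end Empirical

section Converse

lemma card_mul_logb_card_le_neg_sum_logb {ι : Type*} [Fintype ι] {b : ℝ} (hb : 1 < b)
    {q : ι → ℝ} (hq : ∀ i, 0 < q i) (hsum : ∑ i, q i ≤ 1) :
    Fintype.card ι * Real.logb b (Fintype.card ι) ≤ -∑ i, Real.logb b (q i) := by
  set N : ℝ := (Fintype.card ι : ℝ)
  have hlog (i : ι) : Real.log N + Real.log (q i) ≤ N * q i - 1 := by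
    have hN : 0 < N := Nat.cast_pos.2 (Fintype.card_pos_iff.2 ⟨i⟩)
    rw [← Real.log_mul hN.ne' (hq i).ne']
    exact Real.log_le_sub_one_of_pos (mul_pos hN (hq i))
  have hnat : N * Real.log N + ∑ i, Real.log (q i) ≤ 0 :=
    calc N * Real.log N + ∑ i, Real.log (q i) = ∑ i, (Real.log N + Real.log (q i)) := by
          simp [Finset.sum_add_distrib, N]
      _ ≤ ∑ i, (N * q i - 1) := Finset.sum_le_sum fun i _ => hlog i
      _ = N * (∑ i, q i - 1) := by simp [← Finset.mul_sum, mul_sub, N]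
      _ ≤ 0 := mul_nonpos_of_nonneg_of_nonpos (Nat.cast_nonneg _) (by linarith)
  simp only [Real.logb, ← Finset.sum_div, mul_div_assoc', ← neg_div]
  exact div_le_div_of_nonneg_right (by linarith) (Real.log_pos hb).le

variable {A : Type*} [Fintype A] {n M : ℕ}

lemma H2_codebookDist (f : Fin M → Fin n → A) :
    H2 (codebookDist f) =
      -(∑ m, Real.logb 2 (∏ i, codebookDist f (f m i))) / (M * n) := by
  have hprod (m : Fin M) : Real.logb 2 (∏ i, codebookDist f (f m i)) =
      ∑ i, Real.logb 2 (codebookDist f (f m i)) :=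
    Real.logb_prod _ _ fun i _ => (codebookDist_apply_pos f m i).ne'
  simp only [hprod]
  rw [neg_div, ← sum_codebookDist_mul f fun a => Real.logb 2 (codebookDist f a), H2,
    Finset.sum_neg_distrib]

lemma logb_card_le_mul_H2_codebookDist (hM : M ≠ 0) (hn : n ≠ 0) {f : Fin M → Fin n → A}
    (hf : Function.Injective f) : Real.logb 2 M ≤ n * H2 (codebookDist f) := by
  have hgibbs : M * Real.logb 2 M ≤ -∑ m, Real.logb 2 (∏ i, codebookDist f (f m i)) := by
    simpa using card_mul_logb_card_le_neg_sum_logb one_lt_two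
      (fun m => Finset.prod_pos fun i _ => codebookDist_apply_pos f m i)
      ((isDist_codebookDist hM hn f).sum_prod_le_one_of_injective hf)
  have hM' : (0 : ℝ) < M := by positivity
  calc Real.logb 2 M ≤ (-∑ m, Real.logb 2 (∏ i, codebookDist f (f m i))) / M := by
        rwa [le_div_iff₀' hM']
    _ = n * H2 (codebookDist f) := by
        rw [H2_codebookDist]
        field_simp

end Converse

section MAC

variable {K : ℕ} {X : Fin K → Type*} {Y : Type*} [Fintype Y] {W : (∀ k, X k) → Y → ℝ}
  {n : ℕ} {M : Fin K → ℕ}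

lemma sum_macExt (hW : ∀ x, ∑ y, W x y = 1) (x : ∀ k, Fin n → X k) :
    ∑ y, macExt W n x y = 1 := by
  simp only [macExt, ← Fintype.prod_sum, hW, Finset.prod_const_one]

lemma macErr_add_macErr_eq_one (hW : ∀ x, ∑ y, W x y = 1) {f : ∀ k, Fin (M k) → Fin n → X k}
    (g : (∀ k, Fin (M k)) → (Fin n → Y) → Fin K → Bool) {k : Fin K} {m m' : ∀ j, Fin (M j)}
    (hf : ∀ j, f j (m j) = f j (m' j)) (hne : m k ≠ m' k) :
    macErr W n f g k m m + macErr W n f g k m m' = 1 := by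
  have hcompl : (fun y => g m y k ≠ decide (m k = m' k)) =
      fun y => ¬g m y k ≠ decide (m k = m k) := by
    funext y
    simp [hne]
  rw [macErr, macErr, ← funext hf, hcompl, pr_add_pr_not, sum_macExt hW]

variable {f : ∀ k, Fin (M k) → Fin n → X k}
  {g : (∀ k, Fin (M k)) → (Fin n → Y) → Fin K → Bool}
  {φ : ∀ k, X k → ℝ} {Φ : Fin K → ℝ} {lam : ℝ}

lemma IsMACDICode.injective (hW : ∀ x, ∑ y, W x y = 1) (hM : ∀ k, M k ≠ 0)
    (h : IsMACDICode W n f g φ Φ lam) (hlam : lam < 1 / 2) (k : Fin K) :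
    Function.Injective (f k) := by
  intro a b hab
  by_contra hne
  let m₀ : ∀ j, Fin (M j) := fun j => ⟨0, Nat.pos_of_ne_zero (hM j)⟩
  let m := Function.update m₀ k a
  let m' := Function.update m₀ k b
  have hf (j : Fin K) : f j (m j) = f j (m' j) := by
    rcases eq_or_ne j k with rfl | hj
    · simpa [m, m'] using hab
    · simp [m, m', hj]
  have hsum := macErr_add_macErr_eq_one hW g hf (k := k) (by simpa [m, m'] using hne)
  linarith [h.2 k m m, h.2 k m' m]

variable [∀ k, Fintype (X k)]

lemma IsMACDICode.exists_logb_le_mul_H2 (hW : ∀ x, ∑ y, W x y = 1) (hn : n ≠ 0)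
    (hM : ∀ k, M k ≠ 0) (h : IsMACDICode W n f g φ Φ lam) (hlam : lam < 1 / 2) (k : Fin K) :
    ∃ P ∈ costSimplex (φ k) (Φ k), Real.logb 2 (M k) ≤ n * H2 P :=
  ⟨codebookDist (f k), codebookDist_mem_costSimplex (hM k) hn (h.1 k),
    logb_card_le_mul_H2_codebookDist (hM k) hn (h.injective hW hM hlam k)⟩

variable {R : Fin K → ℝ}

lemma macAchievable.exists_le_H2 (hW : ∀ x, ∑ y, W x y = 1) (hR : macAchievable W φ Φ R)
    (k : Fin K) : ∃ P ∈ costSimplex (φ k) (Φ k), R k ≤ H2 P := by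
  obtain ⟨N, hN⟩ := hR.2 (1 / 3) (by norm_num)
  obtain ⟨f, g, hcode⟩ := hN (N + 1) N.le_succ
  have hM (j : Fin K) : ⌈(2 : ℝ) ^ (((N + 1 : ℕ) : ℝ) * R j)⌉₊ ≠ 0 :=
    (Nat.ceil_pos.2 (by positivity)).ne'
  obtain ⟨P, hP, hlog⟩ := hcode.exists_logb_le_mul_H2 hW N.succ_ne_zero hM (by norm_num) k
  have hrate : ((N + 1 : ℕ) : ℝ) * R k ≤ Real.logb 2 ⌈(2 : ℝ) ^ (((N + 1 : ℕ) : ℝ) * R k)⌉₊ := by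
    rw [Real.le_logb_iff_rpow_le one_lt_two (Nat.cast_pos.2 (Nat.pos_of_ne_zero (hM k)))]
    exact Nat.le_ceil _
  exact ⟨P, hP, le_of_mul_le_mul_left (hrate.trans hlog) (by positivity)⟩

lemma nonneg_and_exists_le_H2_of_mem_CDImac (hW : ∀ x, ∑ y, W x y = 1) (hR : R ∈ CDImac W φ Φ)
    (k : Fin K) : 0 ≤ R k ∧ ∃ P ∈ costSimplex (φ k) (Φ k), R k ≤ H2 P := by
  have hclosed : IsClosed {r : ℝ | 0 ≤ r ∧ ∃ P ∈ costSimplex (φ k) (Φ k), r ≤ H2 P} :=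
    isClosed_Ici.inter
      (isClosed_setOf_exists_mem_le (isCompact_costSimplex _ _) continuous_H2.continuousOn)
  have hach : {S | macAchievable W φ Φ S} ⊆
      (fun S => S k) ⁻¹' {r | 0 ≤ r ∧ ∃ P ∈ costSimplex (φ k) (Φ k), r ≤ H2 P} :=
    fun S hS => ⟨hS.1 k, hS.exists_le_H2 hW k⟩
  exact closure_minimal hach (hclosed.preimage (continuous_apply k)) hR

end MAC

theorem mac_DI_outer_bound_general
    {K : ℕ} {X : Fin K → Type*} [∀ k, Fintype (X k)] {Y : Type*} [Fintype Y]
    (W : (∀ k, X k) → Y → ℝ) (hW : ∀ x, IsDist (W x))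
    (φ : ∀ k, X k → ℝ) (Φ : Fin K → ℝ) :
    CDImac W φ Φ ⊆
      { R : Fin K → ℝ | ∃ p : (∀ k, X k) → ℝ, IsDist p ∧
          (∀ k, ∑ x, p x * φ k (x k) ≤ Φ k) ∧
          ∀ k, 0 ≤ R k ∧ R k ≤ H2 (margKth p k) } := by
  intro R hR
  have hbound := nonneg_and_exists_le_H2_of_mem_CDImac (fun x => (hW x).2) hR
  choose P hP hRP using fun k => (hbound k).2
  have hmarg (k : Fin K) : margKth (fun x => ∏ j, P j (x j)) k = P k :=
    margKth_pi_prod k fun j _ => (hP j).1.2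
  refine ⟨fun x => ∏ j, P j (x j), IsDist.pi_prod fun k => (hP k).1, fun k => ?_, fun k => ?_⟩
  · rw [sum_mul_apply_eq_sum_margKth, hmarg]
    exact (hP k).2
  · rw [hmarg]
    exact ⟨(hbound k).1, hRP k⟩

/-- Outer bound of the DI capacity region of a `K`-MAC: every point of the
capacity region has, for some input distribution satisfying the expected-cost constraints,
all component rates bounded by the corresponding marginal entropies. -/
theorem mac_DI_outer_bound
    {K : ℕ} {X : Fin K → Type} [∀ k, Fintype (X k)] {Y : Type} [Fintype Y]
    (W : (∀ k, X k) → Y → ℝ) (hW : ∀ x, IsDist (W x))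
    (φ : ∀ k, X k → ℝ) (hφ : ∀ k x, 0 ≤ φ k x)
    (Φ : Fin K → ℝ) (hΦ : ∀ k, 0 ≤ Φ k) :
    CDImac W φ Φ ⊆
      { R : Fin K → ℝ | ∃ p : (∀ k, X k) → ℝ, IsDist p ∧
          (∀ k, ∑ x, p x * φ k (x k) ≤ Φ k) ∧
          ∀ k, 0 ≤ R k ∧ R k ≤ H2 (margKth p k) } :=
  mac_DI_outer_bound_general W hW φ Φ
end

section
/- Let W : X×S → P(Y) be a channel with finite alphabets, P a probability distribution on X, and p_S a probability distribution on S such that no output distribution p_S W(·|x), x ∈ X, is a convex combination of the distributions {p_S W(·|x′) : x′ ∈ X, x′ ≠ x} (in particular the averaged channel p_S W is injective). Then every element of Q(P, {p_S}, W) satisfies Pr[X′ = X] = 1, and consequently min_{p ∈ Q(P, {p_S}, W)} I(X′; X, S, Y) = H(P). -/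
open scoped BigOperators

/-!
Write `V a = p_S W(·|a)` and `r(a, a')` for the joint law of `(X, X')`. The Markov chain
`X − X' − Y` together with `p_{Y|X} = p_{Y|X'} = V` gives
`(∑ a', r(a, a')) V a = ∑ a', r(a, a') V a'`. If some `r(a, a')` with `a' ≠ a` were positive,
cancelling the term `a' = a` and normalising would exhibit `V a` as a convex combination of the
other `V a'`. So `X' = X` almost surely, hence `(X, X', S, Y)` and `(X, S, Y)` have the same
entropy and `I(X'; X, S, Y) = H(X') = H(P)`. The minimum is over a nonempty set because the
coupling `X' = X` is admissible.
-/

section ConvexIndependence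

variable {𝕜 E ι : Type*} [Field 𝕜] [LinearOrder 𝕜] [IsStrictOrderedRing 𝕜]
  [AddCommGroup E] [Module 𝕜 E] [Fintype ι] {v : ι → E} {w : ι → 𝕜}

lemma exists_weights_of_mem_convexHull_image {s : Set ι} {x : E}
    (hx : x ∈ convexHull 𝕜 (v '' s)) :
    ∃ w : ι → 𝕜, (∀ j, 0 ≤ w j) ∧ (∀ j ∉ s, w j = 0) ∧ ∑ j, w j = 1 ∧ ∑ j, w j • v j = x := by
  classical
  refine convexHull_min (t := {x | ∃ w : ι → 𝕜, (∀ j, 0 ≤ w j) ∧ (∀ j ∉ s, w j = 0) ∧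
    ∑ j, w j = 1 ∧ ∑ j, w j • v j = x}) ?_ ?_ hx
  · rintro _ ⟨i, hi, rfl⟩
    refine ⟨Pi.single i (1 : 𝕜), fun j => ?_, fun j hj => ?_, by simp, by simp [Pi.single_apply]⟩
    · rw [Pi.single_apply]
      split_ifs
      exacts [zero_le_one, le_rfl]
    · exact Pi.single_eq_of_ne (ne_of_mem_of_not_mem hi hj).symm 1
  · rintro _ ⟨w, hw, hws, hw1, rfl⟩ _ ⟨w', hw', hws', hw1', rfl⟩ b b' hb hb' hbb'
    refine ⟨b • w + b' • w', fun j => ?_, fun j hj => ?_, ?_, ?_⟩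
    · exact add_nonneg (mul_nonneg hb (hw j)) (mul_nonneg hb' (hw' j))
    · simp [hws j hj, hws' j hj]
    · simp [Finset.sum_add_distrib, ← Finset.mul_sum, hw1, hw1', hbb']
    · simp [Finset.sum_add_distrib, Finset.smul_sum, add_smul, mul_smul]

lemma convexIndependent_of_forall_ne_sum_smul
    (h : ∀ (i : ι) (w : ι → 𝕜), (∀ j, 0 ≤ w j) → w i = 0 → ∑ j, w j = 1 →
      v i ≠ ∑ j, w j • v j) :
    ConvexIndependent 𝕜 v := by
  refine convexIndependent_iff_notMem_convexHull_sdiff.2 fun i s hi => ?_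
  obtain ⟨w, hw, hws, hw1, hwv⟩ := exists_weights_of_mem_convexHull_image hi
  exact h i w hw (hws i fun hmem => hmem.2 rfl) hw1 hwv.symm

lemma eq_of_sum_smul_eq_of_convexIndependent {s : Set ι}
    (hv : ConvexIndependent 𝕜 fun j : s => v j) (hw : ∀ j, 0 ≤ w j)
    (hws : ∀ j, w j ≠ 0 → j ∈ s) {i : ι} (hi : i ∈ s)
    (hmix : (∑ j, w j) • v i = ∑ j, w j • v j) {j : ι} (hj : w j ≠ 0) : j = i := by
  classical
  by_contra hji
  let t : Finset ι := {k | w k ≠ 0 ∧ k ≠ i}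
  have hpos : 0 < ∑ k ∈ t, w k :=
    Finset.sum_pos (fun k hk => (hw k).lt_of_ne' (Finset.mem_filter.1 hk).2.1)
      ⟨j, by simp [t, hj, hji]⟩
  have hcancel : ∑ k ∈ t, w k • (v k - v i) = 0 := by
    rw [Finset.sum_filter_of_ne]
    · simp only [smul_sub, Finset.sum_sub_distrib, ← Finset.sum_smul, hmix, sub_self]
    · rintro k - hk
      exact ⟨left_ne_zero_of_smul hk, fun hki => hk (by rw [hki, sub_self, smul_zero])⟩
  have hcenter : t.centerMass w v = v i := by
    rw [Finset.centerMass, inv_smul_eq_iff₀ hpos.ne', Finset.sum_smul, ← sub_eq_zero,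
      ← Finset.sum_sub_distrib]
    simpa only [smul_sub] using hcancel
  have hmem : v i ∈ convexHull 𝕜 ((fun k : s => v k) '' {⟨i, hi⟩}ᶜ) := by
    rw [← hcenter]
    refine t.centerMass_mem_convexHull (fun k _ => hw k) hpos fun k hk => ?_
    obtain ⟨hwk, hki⟩ := (Finset.mem_filter.1 hk).2
    exact ⟨⟨k, hws k hwk⟩, fun h => hki (congrArg Subtype.val h), rfl⟩
  exact hv _ ⟨i, hi⟩ hmem rfl

end ConvexIndependence

lemma H2_comp_of_injective {α β : Type*} [Fintype α] [Fintype β] {e : α → β}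
    (he : Function.Injective e) {p : β → ℝ} (hp : ∀ b ∉ Set.range e, p b = 0) :
    H2 (p ∘ e) = H2 p :=
  Fintype.sum_of_injective e he _ _ (fun b hb => by simp [hp b hb]) fun _ => rfl

/-- The averaged channel `pW`, with `(pW)(y|a) = ∑ s, p s * W(y|a,s)`. -/
def avgChannel {A S Y : Type*} [Fintype S] (p : S → ℝ) (W : A → S → Y → ℝ) (a : A) (y : Y) : ℝ :=
  ∑ s, p s * W a s y

section Marginals

variable {A S Y : Type*} [Fintype S] {q : A × A × S × Y → ℝ} {a a' : A}

lemma margXX'_nonneg [Fintype Y] (hq : ∀ t, 0 ≤ q t) (a a' : A) : 0 ≤ margXX' q a a' :=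
  Finset.sum_nonneg fun _ _ => Finset.sum_nonneg fun _ _ => hq _

lemma eq_zero_of_margXX'_eq_zero [Fintype Y] (hq : ∀ t, 0 ≤ q t) (h : margXX' q a a' = 0)
    (t : S × Y) : q (a, a', t) = 0 := by
  have hsum : ∑ t, q (a, a', t) = 0 := (Fintype.sum_prod_type _).trans h
  exact congrFun ((Fintype.sum_eq_zero_iff_of_nonneg fun t => hq (a, a', t)).1 hsum) t

variable [Fintype A]

lemma sum_margXX'Y_left (q : A × A × S × Y → ℝ) (a' : A) (y : Y) :
    ∑ a, margXX'Y q a a' y = margX'Y q a' y :=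
  rfl

lemma sum_margXX'Y_right (q : A × A × S × Y → ℝ) (a : A) (y : Y) :
    ∑ a', margXX'Y q a a' y = margXY q a y :=
  rfl

variable [Fintype Y]

lemma sum_margXX'_left (q : A × A × S × Y → ℝ) (a' : A) :
    ∑ a, margXX' q a a' = margX' q a' :=
  rfl

lemma sum_margXX'_right (q : A × A × S × Y → ℝ) (a : A) :
    ∑ a', margXX' q a a' = margX q a :=
  rfl

lemma sum_margX (q : A × A × S × Y → ℝ) : ∑ a, margX q a = ∑ t, q t := by
  simp only [margX, Fintype.sum_prod_type]

lemma margX_ne_zero_of_margXX'_ne_zero (hq : ∀ t, 0 ≤ q t) (h : margXX' q a a' ≠ 0) :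
    margX q a ≠ 0 := by
  contrapose! h
  exact congrFun ((Fintype.sum_eq_zero_iff_of_nonneg fun a' => margXX'_nonneg hq a a').1 h) a'

lemma margX'_ne_zero_of_margXX'_ne_zero (hq : ∀ t, 0 ≤ q t) (h : margXX' q a a' ≠ 0) :
    margX' q a' ≠ 0 := by
  contrapose! h
  exact congrFun ((Fintype.sum_eq_zero_iff_of_nonneg fun a => margXX'_nonneg hq a a').1 h) a

end Marginals

/-- The law `q` of `(X, X', S, Y)` is concentrated on `X' = X`. For nonnegative `q` of total mass
one this says `Pr[X' = X] = 1`. -/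
def IsDiagonal {A B : Type*} (q : A × A × B → ℝ) : Prop :=
  ∀ ⦃a a'⦄, a ≠ a' → ∀ t, q (a, a', t) = 0

namespace IsDiagonal

variable {A S Y : Type*} [Fintype A] {q : A × A × S × Y → ℝ}

lemma margXSY_apply (hq : IsDiagonal q) (t : A × S × Y) : margXSY q t = q (t.1, t) :=
  Fintype.sum_eq_single t.1 fun _ ha' => hq ha'.symm _

variable [Fintype S] [Fintype Y]

lemma margXX'_self (hq : IsDiagonal q) (a : A) : margXX' q a a = margX q a := by
  refine (Fintype.sum_eq_single a fun a' ha' => ?_).symm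
  simp [margXX', hq ha'.symm]

lemma H2_margXSY (hq : IsDiagonal q) : H2 (margXSY q) = H2 q := by
  have hinj : Function.Injective fun t : A × S × Y => (t.1, t) := fun _ _ h => congrArg Prod.snd h
  rw [← H2_comp_of_injective hinj]
  · exact congrArg H2 (funext hq.margXSY_apply)
  · rintro ⟨a, a', t⟩ hrange
    exact hq (fun h => hrange ⟨(a', t), by rw [h]⟩) t

lemma infoX'_eq (hq : IsDiagonal q) : infoX' q = H2 (margX' q) := by
  rw [infoX', hq.H2_margXSY, add_sub_cancel_right]

end IsDiagonal

section DiagonalCoupling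

variable {A S Y : Type*} [DecidableEq A]

/-- The law of `(X, X, T)` when `(X, T)` has law `p`: the coupling with `X' = X`. -/
def diagCoupling {B : Type*} (p : A × B → ℝ) (t : A × A × B) : ℝ :=
  if t.1 = t.2.1 then p t.2 else 0

lemma isDist_diagCoupling {B : Type*} [Fintype A] [Fintype B] {p : A × B → ℝ} (hp : IsDist p) :
    IsDist (diagCoupling p) := by
  refine ⟨fun t => ?_, ?_⟩
  · unfold diagCoupling
    split_ifs
    exacts [hp.1 _, le_rfl]
  · rw [← hp.2, Fintype.sum_prod_type, Fintype.sum_prod_type]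
    refine Fintype.sum_congr _ _ fun a => ?_
    rw [Fintype.sum_prod_type,
      Fintype.sum_eq_single a fun a' ha' => by simp [diagCoupling, ha'.symm]]
    simp [diagCoupling]

variable (p : A × S × Y → ℝ)

lemma margS_diagCoupling [Fintype A] [Fintype Y] (s : S) :
    margS (diagCoupling p) s = ∑ a, ∑ y, p (a, s, y) := by
  refine Fintype.sum_congr _ _ fun a => ?_
  rw [Fintype.sum_eq_single a fun a' ha' => by simp [diagCoupling, ha'.symm]]
  simp [diagCoupling]

variable [Fintype S]

lemma margXX'Y_diagCoupling (a a' : A) (y : Y) :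
    margXX'Y (diagCoupling p) a a' y = if a = a' then ∑ s, p (a', s, y) else 0 := by
  split_ifs with h <;> simp [margXX'Y, diagCoupling, h]

lemma margXX'_diagCoupling [Fintype Y] (a a' : A) :
    margXX' (diagCoupling p) a a' = if a = a' then ∑ s, ∑ y, p (a', s, y) else 0 := by
  split_ifs with h <;> simp [margXX', diagCoupling, h]

variable [Fintype A]

lemma margXY_diagCoupling (a : A) (y : Y) :
    margXY (diagCoupling p) a y = ∑ s, p (a, s, y) := by
  simp [← sum_margXX'Y_right, margXX'Y_diagCoupling]

lemma margX'Y_diagCoupling (a' : A) (y : Y) :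
    margX'Y (diagCoupling p) a' y = ∑ s, p (a', s, y) := by
  simp [← sum_margXX'Y_left, margXX'Y_diagCoupling]

variable [Fintype Y]

lemma margX_diagCoupling (a : A) : margX (diagCoupling p) a = ∑ s, ∑ y, p (a, s, y) := by
  simp [← sum_margXX'_right, margXX'_diagCoupling]

lemma margX'_diagCoupling (a' : A) : margX' (diagCoupling p) a' = ∑ s, ∑ y, p (a', s, y) := by
  simp [← sum_margXX'_left, margXX'_diagCoupling]

end DiagonalCoupling

section ChannelJoint

variable {A S Y : Type*} {P : A → ℝ} {pS : S → ℝ} {W : A → S → Y → ℝ}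

/-- The law of `(X, S, Y)` when the input `X ∼ P` and the state `S ∼ pS` are independent and `Y` is
the output of the channel `W`. -/
def channelJoint (P : A → ℝ) (pS : S → ℝ) (W : A → S → Y → ℝ) (t : A × S × Y) : ℝ :=
  P t.1 * (pS t.2.1 * W t.1 t.2.1 t.2.2)

lemma sum_channelJoint_input_output [Fintype A] [Fintype Y]
    (hW : ∀ a s, IsDist (W a s)) (hP : IsDist P) (s : S) :
    ∑ a, ∑ y, channelJoint P pS W (a, s, y) = pS s := by
  simp only [channelJoint, ← Finset.mul_sum, (hW _ _).2, mul_one, ← Finset.sum_mul, hP.2, one_mul]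

variable [Fintype S]

lemma sum_channelJoint_state (a : A) (y : Y) :
    ∑ s, channelJoint P pS W (a, s, y) = P a * avgChannel pS W a y := by
  simp only [channelJoint, avgChannel, Finset.mul_sum]

variable [Fintype Y]

lemma sum_channelJoint_state_output (hW : ∀ a s, IsDist (W a s)) (hpS : IsDist pS) (a : A) :
    ∑ s, ∑ y, channelJoint P pS W (a, s, y) = P a := by
  simp only [channelJoint, ← Finset.mul_sum, (hW _ _).2, mul_one, hpS.2]

lemma isDist_channelJoint [Fintype A] (hW : ∀ a s, IsDist (W a s)) (hP : IsDist P)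
    (hpS : IsDist pS) : IsDist (channelJoint P pS W) := by
  refine ⟨fun t => mul_nonneg (hP.1 _) (mul_nonneg (hpS.1 _) ((hW _ _).1 _)), ?_⟩
  simp only [Fintype.sum_prod_type, sum_channelJoint_state_output hW hpS, hP.2]

end ChannelJoint

section QSet

variable {A S Y : Type*} [Fintype A] [Fintype S] [Fintype Y] {P : A → ℝ} {PS : Set (S → ℝ)}
  {pS : S → ℝ} {W : A → S → Y → ℝ} {q : A × A × S × Y → ℝ}

lemma diagCoupling_channelJoint_mem_QSet [DecidableEq A] (hW : ∀ a s, IsDist (W a s))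
    (hP : IsDist P) (hpS : IsDist pS) (hPS : pS ∈ PS) :
    diagCoupling (channelJoint P pS W) ∈ QSet P PS W := by
  set q := diagCoupling (channelJoint P pS W) with hq
  have hS : margS q = pS := funext fun s => by
    rw [hq, margS_diagCoupling, sum_channelJoint_input_output hW hP]
  have hX : margX q = P := funext fun a => by
    rw [hq, margX_diagCoupling, sum_channelJoint_state_output hW hpS]
  have hX' : margX' q = P := funext fun a' => by
    rw [hq, margX'_diagCoupling, sum_channelJoint_state_output hW hpS]
  have hXY (a : A) (y : Y) : margXY q a y = P a * avgChannel pS W a y := by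
    rw [hq, margXY_diagCoupling, sum_channelJoint_state]
  have hX'Y (a' : A) (y : Y) : margX'Y q a' y = P a' * avgChannel pS W a' y := by
    rw [hq, margX'Y_diagCoupling, sum_channelJoint_state]
  have hMarkov (a a' : A) (y : Y) :
      margXX'Y q a a' y * P a' = margXX' q a a' * (P a' * avgChannel pS W a' y) := by
    rw [hq, margXX'Y_diagCoupling, margXX'_diagCoupling, sum_channelJoint_state,
      sum_channelJoint_state_output hW hpS]
    split_ifs <;> ring
  refine ⟨isDist_diagCoupling (isDist_channelJoint hW hP hpS), hS ▸ hPS, ?_, ⟨pS, hPS, ?_⟩,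
    hX, hX', ?_⟩
  · rw [hX, hS]
    exact hXY
  · rw [hX']
    exact hX'Y
  · simpa only [hX', hX'Y] using hMarkov

lemma exists_margXX'Y_eq_mul_avgChannel (hq : q ∈ QSet P PS W) :
    ∃ p ∈ PS, ∀ a a' y, margXX'Y q a a' y = margXX' q a a' * avgChannel p W a' y := by
  obtain ⟨⟨hq0, -⟩, -, -, ⟨p, hp, hX'Y⟩, -, -, hMarkov⟩ := hq
  refine ⟨p, hp, fun a a' y => ?_⟩
  by_cases h : margXX' q a a' = 0
  · rw [h, zero_mul]
    exact Fintype.sum_eq_zero _ fun s => eq_zero_of_margXX'_eq_zero hq0 h (s, y)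
  · refine mul_right_cancel₀ (margX'_ne_zero_of_margXX'_ne_zero hq0 h) ?_
    rw [hMarkov, hX'Y, mul_assoc, mul_comm (avgChannel p W a' y), avgChannel]

lemma exists_margX_smul_avgChannel_eq_sum (hq : q ∈ QSet P PS W) :
    ∃ p ∈ PS, ∀ a, margX q a • avgChannel (margS q) W a =
      ∑ a', margXX' q a a' • avgChannel p W a' := by
  obtain ⟨p, hp, hfactor⟩ := exists_margXX'Y_eq_mul_avgChannel hq
  obtain ⟨-, -, hXY, -⟩ := hq
  refine ⟨p, hp, fun a => funext fun y => ?_⟩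
  calc margX q a * avgChannel (margS q) W a y
    _ = ∑ a', margXX'Y q a a' y := (hXY a y).symm
    _ = ∑ a', margXX' q a a' * avgChannel p W a' y := Fintype.sum_congr _ _ (hfactor a · y)
    _ = (∑ a', margXX' q a a' • avgChannel p W a') y := by simp

lemma isDiagonal_of_mem_QSet
    (hV : ConvexIndependent ℝ fun a : Function.support P => avgChannel pS W a)
    (hq : q ∈ QSet P {pS} W) : IsDiagonal q := by
  obtain ⟨p, rfl, hmix⟩ := exists_margX_smul_avgChannel_eq_sum hq
  obtain ⟨⟨hq0, -⟩, hS, -, -, hX, hX', -⟩ := hq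
  rw [Set.mem_singleton_iff] at hS
  intro a a' hne
  refine eq_zero_of_margXX'_eq_zero hq0 ?_
  by_contra hr
  have ha : a ∈ Function.support P := hX ▸ margX_ne_zero_of_margXX'_ne_zero hq0 hr
  have hmix_a := hmix a
  rw [hS, ← sum_margXX'_right] at hmix_a
  exact hne (eq_of_sum_smul_eq_of_convexIndependent hV (margXX'_nonneg hq0 a)
    (fun b hb => hX' ▸ margX'_ne_zero_of_margXX'_ne_zero hq0 hb) ha hmix_a hr).symm

theorem QSet_of_no_convex_combination_general
    (W : A → S → Y → ℝ) (hW : ∀ a s, IsDist (W a s)) (P : A → ℝ) (hP : IsDist P)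
    (pS : S → ℝ) (hpS : IsDist pS)
    (hV : ConvexIndependent ℝ fun a : Function.support P => avgChannel pS W a) :
    (∀ q ∈ QSet P {pS} W, ∑ a, margXX' q a a = 1) ∧
    minInfoX' (QSet P {pS} W) = H2 P := by
  classical
  have hdiag : ∀ q ∈ QSet P {pS} W, IsDiagonal q := fun q => isDiagonal_of_mem_QSet hV
  refine ⟨fun q hq => ?_, ?_⟩
  · simp only [(hdiag q hq).margXX'_self, sum_margX, hq.1.2]
  · have himage : infoX' '' QSet P {pS} W = {H2 P} := by
      refine Set.eq_singleton_iff_nonempty_unique_mem.2 ⟨.image _ ⟨_,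
        diagCoupling_channelJoint_mem_QSet hW hP hpS (Set.mem_singleton pS)⟩, ?_⟩
      rintro _ ⟨q, hq, rfl⟩
      have hqdiag := hdiag q hq
      obtain ⟨-, -, -, -, -, hX', -⟩ := hq
      rw [hqdiag.infoX'_eq, hX']
    rw [minInfoX', himage, csInf_singleton]

end QSet

/-- If no output distribution `p_S W(·|x)` of the averaged channel is a
convex combination of the output distributions of the other inputs, then every element of
`Q(P, {p_S}, W)` has `Pr[X' = X] = 1`, and `min_{q ∈ Q} I(X'; X, S, Y) = H(P)`. -/
theorem QSet_of_no_convex_combination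
    {A S Y : Type} [Fintype A] [Fintype S] [Fintype Y]
    (W : A → S → Y → ℝ) (hW : ∀ a s, IsDist (W a s))
    (P : A → ℝ) (hP : IsDist P)
    (pS : S → ℝ) (hpS : IsDist pS)
    (hconv : ∀ (a : A) (μ : A → ℝ), (∀ a', 0 ≤ μ a') → μ a = 0 → ∑ a', μ a' = 1 →
      (fun y : Y => ∑ s, pS s * W a s y) ≠
        (fun y : Y => ∑ a', μ a' * ∑ s, pS s * W a' s y)) :
    (∀ q ∈ QSet P {pS} W, ∑ a, margXX' q a a = 1) ∧
    minInfoX' (QSet P {pS} W) = H2 P :=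
  QSet_of_no_convex_combination_general W hW P hP pS hpS
    ((convexIndependent_of_forall_ne_sum_smul fun a μ hμ ha h1 h =>
      hconv a μ hμ ha h1 (h.trans (by ext; simp))).subtype _)
end

section
/- (Arbitrarily large deterministic identification codes under the average-error criterion for a DMC.) Let V : X → P(Y) be a discrete memoryless channel with cost function φ : X → [0,∞) and bound Φ ≥ 0, and suppose the maximal-error DI capacity satisfies C_DI(V, φ, Φ) > 0. Then for every sequence (M_n)_{n∈ℕ} of natural numbers and every λ > 0, there exists, for all sufficiently large n, an (M_n, n, φ, Φ, λ) DIA code for V. -/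
open scoped BigOperators

/-!
Repeating the codewords of a maximal-error DI code of size `K` periodically gives a DIA code of any
size `M`. Two distinct messages that are sent with different codewords still cause a false
identification with probability at most the old error bound; two that share a codeword may always
cause one. For each message there are at most `(M - 1) / K` others sharing its codeword, so the
average false-identification error grows by at most `1 / K`, independently of `M`. A positive DI
capacity provides such codes with `K → ∞`.
-/

section Probability

variable {α : Type*} [Fintype α] {p : α → ℝ}

theorem IsDist.pr_nonneg (hp : IsDist p) (A : α → Prop) : 0 ≤ pr p A := by
  classical
  exact Finset.sum_nonneg fun x _ => ite_nonneg (hp.1 x) le_rfl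

theorem IsDist.pr_le_one (hp : IsDist p) (A : α → Prop) : pr p A ≤ 1 := by
  classical
  calc pr p A ≤ ∑ x, p x :=
        Finset.sum_le_sum fun x _ => (ite_le_sup (p x) 0 (A x)).trans (sup_le le_rfl (hp.1 x))
    _ = 1 := hp.2

theorem IsDist.pi {ι : Type*} [Fintype ι] [DecidableEq ι] {β : ι → Type*} [∀ i, Fintype (β i)]
    {p : ∀ i, β i → ℝ} (hp : ∀ i, IsDist (p i)) :
    IsDist fun y : ∀ i, β i => ∏ i, p i (y i) := by
  refine ⟨fun y => Finset.prod_nonneg fun i _ => (hp i).1 (y i), ?_⟩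
  rw [← Fintype.prod_sum]
  exact Finset.prod_eq_one fun i _ => (hp i).2

end Probability

theorem count_modEq_mul_lt {K : ℕ} (hK : 0 < K) (v M : ℕ) :
    M.count (· ≡ v [MOD K]) * K < M + K := by
  have hdiv := Nat.div_add_mod' M K
  rw [Nat.count_modEq_card M hK, add_mul]
  split_ifs <;> omega

theorem card_ne_ofNat_eq_mul_lt {K M : ℕ} [NeZero K] (m' : Fin M) :
    Finset.card {m : Fin M | m ≠ m' ∧ Fin.ofNat K m = Fin.ofNat K m'} * K < M := by
  have hmod (m : Fin M) : Fin.ofNat K m = Fin.ofNat K m' ↔ (m : ℕ) ≡ m' [MOD K] := Fin.ext_iff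
  have hfilter : ({m : Fin M | m ≠ m' ∧ Fin.ofNat K m = Fin.ofNat K m'} : Finset (Fin M)) =
      ({m : Fin M | (m : ℕ) ≡ m' [MOD K]} : Finset (Fin M)).erase m' := by
    ext m
    simp only [hmod, Finset.mem_erase, Finset.mem_filter, Finset.mem_univ, true_and]
  have hcount : Finset.card {m : Fin M | (m : ℕ) ≡ m' [MOD K]} = M.count (· ≡ m' [MOD K]) := by
    rw [Nat.count_eq_card_filter_range, Finset.card_filter, Finset.card_filter,
      Fin.sum_univ_eq_sum_range (fun m => if m ≡ m' [MOD K] then 1 else 0)]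
  have hlt := count_modEq_mul_lt (NeZero.pos K) m' M
  rw [hfilter, Finset.card_erase_of_mem (by simp [Nat.ModEq.refl]), hcount, Nat.sub_one_mul]
  have := m'.pos
  omega

section Codes

variable {X Y : Type*} [Fintype X] [Fintype Y] {V : X → Y → ℝ} {φ : X → ℝ} {Φ lam ε : ℝ}
  {n K : ℕ} {f : Fin K → Fin n → X} {g : Fin K → (Fin n → Y) → Bool}

theorem IsDICode.error_nonneg (hV : ∀ x, IsDist (V x)) (hfg : IsDICode (dmcExt V n) f g lam)
    (k : Fin K) : 0 ≤ lam :=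
  ((IsDist.pi fun i => hV (f k i)).pr_nonneg _).trans (hfg.1 k)

theorem IsDICode.sum_pr_comp_le (hV : ∀ x, IsDist (V x)) (hfg : IsDICode (dmcExt V n) f g lam)
    {M : ℕ} (r : Fin M → Fin K) (m' : Fin M) :
    ∑ m with m ≠ m', pr (dmcExt V n (f (r m))) (fun y => g (r m') y = true) ≤
      ((M : ℝ) - 1) * lam + Finset.card {m | m ≠ m' ∧ r m = r m'} := by
  have hlam : 0 ≤ lam := hfg.error_nonneg hV (r m')
  have hterm (m : Fin M) : pr (dmcExt V n (f (r m))) (fun y => g (r m') y = true) ≤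
      lam + if r m = r m' then 1 else 0 := by
    split_ifs with h
    · have hdist : IsDist (dmcExt V n (f (r m))) := IsDist.pi fun i => hV (f (r m) i)
      linarith [hdist.pr_le_one fun y => g (r m') y = true]
    · simpa using hfg.2 _ _ h
  have hcard : (Finset.card {m | m ≠ m'} : ℝ) = (M : ℝ) - 1 := by
    simp [Finset.filter_ne', Nat.cast_sub m'.pos]
  calc ∑ m with m ≠ m', pr (dmcExt V n (f (r m))) (fun y => g (r m') y = true)
      ≤ ∑ m with m ≠ m', (lam + if r m = r m' then 1 else 0) := Finset.sum_le_sum fun m _ => hterm m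
    _ = ((M : ℝ) - 1) * lam + Finset.card {m | m ≠ m' ∧ r m = r m'} := by
      rw [Finset.sum_add_distrib, Finset.sum_const, nsmul_eq_mul, hcard, Finset.sum_boole,
        Finset.filter_filter]

theorem IsDICode.isDMCDIACode_comp (hV : ∀ x, IsDist (V x))
    (hfg : IsDICode (dmcExt V n) f g lam) (hcost : ∀ k, (1 / (n : ℝ)) * ∑ i, φ (f k i) ≤ Φ)
    (hε : 0 ≤ ε) {M : ℕ} {r : Fin M → Fin K}
    (hr : ∀ m', (Finset.card {m | m ≠ m' ∧ r m = r m'} : ℝ) ≤ ε * ((M : ℝ) - 1)) :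
    IsDMCDIACode V (f ∘ r) (g ∘ r) φ Φ (lam + ε) := by
  refine ⟨fun m => hcost (r m), fun m => (hfg.1 (r m)).trans (by linarith), fun m' => ?_⟩
  have hlam : 0 ≤ lam := hfg.error_nonneg hV (r m')
  have hM : (1 : ℝ) ≤ M := mod_cast m'.pos
  refine div_le_of_le_mul₀ (by linarith) (by linarith) ?_
  calc _ ≤ ((M : ℝ) - 1) * lam + Finset.card {m | m ≠ m' ∧ r m = r m'} := by
        simpa only [Function.comp_apply] using hfg.sum_pr_comp_le hV r m'
    _ ≤ (lam + ε) * ((M : ℝ) - 1) := by linarith [hr m']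

theorem IsDICode.exists_isDMCDIACode [NeZero K] (hV : ∀ x, IsDist (V x))
    (hfg : IsDICode (dmcExt V n) f g lam) (hcost : ∀ k, (1 / (n : ℝ)) * ∑ i, φ (f k i) ≤ Φ)
    (hK : (K : ℝ)⁻¹ ≤ ε) (M : ℕ) :
    ∃ (f' : Fin M → Fin n → X) (g' : Fin M → (Fin n → Y) → Bool),
      IsDMCDIACode V f' g' φ Φ (lam + ε) := by
  have hK0 : (0 : ℝ) < K := mod_cast NeZero.pos K
  have hε : 0 ≤ ε := (inv_nonneg.2 hK0.le).trans hK
  refine ⟨_, _, hfg.isDMCDIACode_comp (r := fun m => Fin.ofNat K m) hV hcost hε fun m' => ?_⟩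
  have hM : (1 : ℝ) ≤ M := mod_cast m'.pos
  have hcard : (Finset.card {m : Fin M | m ≠ m' ∧ Fin.ofNat K m = Fin.ofNat K m'} : ℝ) * K ≤
      (M : ℝ) - 1 := le_sub_iff_add_le.2 (mod_cast card_ne_ofNat_eq_mul_lt m')
  calc (Finset.card {m : Fin M | m ≠ m' ∧ Fin.ofNat K m = Fin.ofNat K m'} : ℝ)
      ≤ (K : ℝ)⁻¹ * ((M : ℝ) - 1) := by rwa [inv_mul_eq_div, le_div_iff₀ hK0]
    _ ≤ ε * ((M : ℝ) - 1) := mul_le_mul_of_nonneg_right hK (by linarith)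

end Codes

section Capacity

open Filter

theorem tendsto_ceil_two_rpow_atTop {R : ℝ} (hR : 0 < R) :
    Tendsto (fun n : ℕ => ⌈(2 : ℝ) ^ ((n : ℝ) * R)⌉₊) atTop atTop :=
  tendsto_nat_ceil_atTop.comp <| (tendsto_rpow_atTop_of_base_gt_one 2 one_lt_two).comp <|
    tendsto_natCast_atTop_atTop.atTop_mul_const hR

variable {X Y : Type*} [Fintype X] [Fintype Y] {V : X → Y → ℝ} {φ : X → ℝ} {Φ : ℝ}

theorem exists_pos_dmcAchievable (hpos : 0 < CDIdmc V φ Φ) : ∃ R > 0, dmcAchievable V φ Φ R := by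
  contrapose! hpos
  exact Real.sSup_nonpos fun R hR => not_lt.1 fun hR0 => hpos R hR0 hR

theorem dmc_DIA_arbitrarily_large_codes_general (hV : ∀ x, IsDist (V x))
    (hpos : 0 < CDIdmc V φ Φ) {lam : ℝ} (hlam : 0 < lam) :
    ∃ N : ℕ, ∀ n ≥ N, ∀ M : ℕ, ∃ (f : Fin M → Fin n → X) (g : Fin M → (Fin n → Y) → Bool),
      IsDMCDIACode V f g φ Φ lam := by
  obtain ⟨R, hR0, -, hR⟩ := exists_pos_dmcAchievable hpos
  obtain ⟨N₁, hcode⟩ := hR (lam / 2) (half_pos hlam)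
  obtain ⟨N₂, hsize⟩ := eventually_atTop.1 <|
    ((tendsto_inv_atTop_nhds_zero_nat (𝕜 := ℝ)).comp
      (tendsto_ceil_two_rpow_atTop hR0)).eventually_le_const (half_pos hlam)
  refine ⟨max N₁ N₂, fun n hn M => ?_⟩
  obtain ⟨f, g, hcost, hfg⟩ := hcode n (le_of_max_le_left hn)
  have : NeZero ⌈(2 : ℝ) ^ ((n : ℝ) * R)⌉₊ := ⟨(Nat.ceil_pos.2 (by positivity)).ne'⟩
  simpa only [add_halves] using
    hfg.exists_isDMCDIACode hV hcost (hsize n (le_of_max_le_right hn)) M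

end Capacity

/-- If the maximal-error DI capacity of a DMC is positive, then under the
average false-identification error criterion arbitrarily large code-size sequences are
achievable. -/
theorem dmc_DIA_arbitrarily_large_codes
    {X Y : Type} [Fintype X] [Fintype Y]
    (V : X → Y → ℝ) (hV : ∀ x, IsDist (V x))
    (φ : X → ℝ) (hφ : ∀ x, 0 ≤ φ x) (Φ : ℝ) (hΦ : 0 ≤ Φ)
    (hpos : 0 < CDIdmc V φ Φ) :
    ∀ (Mseq : ℕ → ℕ) (lam : ℝ), 0 < lam → ∃ N : ℕ, ∀ n ≥ N,
      ∃ (f : Fin (Mseq n) → Fin n → X) (g : Fin (Mseq n) → (Fin n → Y) → Bool),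
        IsDMCDIACode V f g φ Φ lam := by
  intro Mseq lam hlam
  obtain ⟨N, hN⟩ := dmc_DIA_arbitrarily_large_codes_general hV hpos hlam
  exact ⟨N, fun n hn => hN n hn (Mseq n)⟩
end
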